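/- Let G be a grid diagram of size n, and let ℓ be the number of orbits of the permutation σ_X^{-1} ∘ σ_O of ℤ/n (the number of components of the link presented by G). Let C̃(G) be the fully blocked grid complex: the ℤ/2-vector space with basis the generators of G, with differential ∂̃x = Σ_y Σ_r y, summing over empty rectangles r from x to y whose interior contains no O-marking and no X-marking. Then the ℤ/2-dimension of the homology H_*(C̃(G)) is divisible by 2^{n−ℓ}. -/

import Mathlib

namespace GridDiagrams

attribute [local instance] Classical.propDecidable

variable {n : ℕ}

/-- `c` lies in the cyclic half-open interval `[a, b)` in `ZMod n`. -/
def cycIco (a b c : ZMod n) : Prop := (c - a).val < (b - a).val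

/-- `c` lies in the open cyclic interval `(a, b)` in `ZMod n`. -/
def cycIoo (a b c : ZMod n) : Prop := 0 < (c - a).val ∧ (c - a).val < (b - a).val

/-- The set of squares making up the rectangle determined by the generator `x`
and the ordered pair of columns `(a, b)`. -/
def rectSquares (x : Equiv.Perm (ZMod n)) (a b : ZMod n) : Set (ZMod n × ZMod n) :=
  {q | cycIco a b q.1 ∧ cycIco (x a) (x b) q.2}

/-- The lattice points in the open interior of the rectangle determined by `x`
and the ordered pair of columns `(a, b)`. -/
def rectInterior (x : Equiv.Perm (ZMod n)) (a b : ZMod n) : Set (ZMod n × ZMod n) :=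
  {q | cycIoo a b q.1 ∧ cycIoo (x a) (x b) q.2}

/-- The ordered pair `(a, b)` determines a rectangle from `x` to `y`. -/
def IsRect (x y : Equiv.Perm (ZMod n)) (a b : ZMod n) : Prop :=
  a ≠ b ∧ y = x * Equiv.swap a b

/-- The ordered pair `(a, b)` determines an empty rectangle from `x` to `y`. -/
def IsEmptyRect (x y : Equiv.Perm (ZMod n)) (a b : ZMod n) : Prop :=
  IsRect x y a b ∧ ∀ i : ZMod n, (i, x i) ∉ rectInterior x a b

/-- The fully blocked grid complex `C̃(G)`: the `ℤ/2`-vector space with basis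
the generators of `G`. -/
abbrev TildeC (n : ℕ) := Equiv.Perm (ZMod n) →₀ ZMod 2

/-- The value of the fully blocked differential on the generator `x`:
`∂̃x = Σ_y Σ_r y`, the sum over empty rectangles `r` from `x` to `y` whose
interior contains no `O`-marking and no `X`-marking. -/
noncomputable def tildeImage [NeZero n] (σO σX : Equiv.Perm (ZMod n))
    (x : Equiv.Perm (ZMod n)) : TildeC n :=
  ∑ y : Equiv.Perm (ZMod n), ∑ a : ZMod n, ∑ b : ZMod n,
    if IsEmptyRect x y a b ∧ (∀ i : ZMod n, (i, σO i) ∉ rectSquares x a b) ∧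
        (∀ i : ZMod n, (i, σX i) ∉ rectSquares x a b)
    then Finsupp.single y (1 : ZMod 2) else 0

/-- The fully blocked differential `∂̃` as a `ℤ/2`-linear endomorphism of
`C̃(G)`. -/
noncomputable def tildeDiff [NeZero n] (σO σX : Equiv.Perm (ZMod n)) :
    TildeC n →ₗ[ZMod 2] TildeC n :=
  Finsupp.lsum (ZMod 2) fun x =>
    LinearMap.toSpanSingleton (ZMod 2) (TildeC n) (tildeImage σO σX x)

/-- The orbit equivalence relation of a permutation `f` (two points are
equivalent iff they lie in the same orbit, i.e. the same cycle of `f`). -/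
def orbitSetoid {α : Type*} (f : Equiv.Perm α) : Setoid α :=
  ⟨f.SameCycle, ⟨fun x => Equiv.Perm.SameCycle.refl f x, fun h => h.symm,
    fun h₁ h₂ => h₁.trans h₂⟩⟩

/-- The number of orbits of a permutation `f`: for `f = σX⁻¹ ∘ σO` on a grid
diagram this is the number `ℓ` of components of the presented link. -/
noncomputable def numOrbits {α : Type*} (f : Equiv.Perm α) : ℕ :=
  Nat.card (Quotient (orbitSetoid f))

/-- The homology `H_*(C̃(G))` of the fully blocked complex:
`ker ∂̃ / im ∂̃`. -/
noncomputable abbrev tildeHomology (n : ℕ) [NeZero n] (σO σX : Equiv.Perm (ZMod n)) :=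
  LinearMap.ker (tildeDiff σO σX) ⧸
    (Submodule.comap (LinearMap.ker (tildeDiff σO σX)).subtype
      (LinearMap.range (tildeDiff σO σX)) :
      Submodule (ZMod 2) (LinearMap.ker (tildeDiff σO σX)))

section comb
set_option linter.unusedSectionVars false
set_option linter.unusedSimpArgs false
set_option linter.unusedVariables false
variable [NeZero n]

theorem val_sub_eq (a c : ZMod n) : (c - a).val = if a.val ≤ c.val then c.val - a.val else c.val + n - a.val := by
  have ha := ZMod.val_lt a
  have hc := ZMod.val_lt c
  have h : (c - a).val + a.val = c.val ∨ (c - a).val + a.val = c.val + n := by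
    have h1 := ZMod.val_add (c - a) a
    rw [sub_add_cancel] at h1
    have h2 := ZMod.val_lt (c - a)
    rcases lt_or_ge ((c - a).val + a.val) n with h3 | h3
    · rw [Nat.mod_eq_of_lt h3] at h1; omega
    · rw [Nat.mod_eq_sub_mod h3, Nat.mod_eq_of_lt (by omega)] at h1; omega
  have h2 := ZMod.val_lt (c - a)
  split_ifs <;> omega

theorem J_iff (a b c : ZMod n) : cycIoo a b c ↔
    (a.val < c.val ∧ c.val < b.val) ∨ (c.val < b.val ∧ b.val < a.val) ∨ (b.val < a.val ∧ a.val < c.val) := by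
  have ha := ZMod.val_lt a
  have hb := ZMod.val_lt b
  have hc := ZMod.val_lt c
  unfold cycIoo
  rw [val_sub_eq, val_sub_eq]
  split_ifs <;> omega

theorem I_iff (a b c : ZMod n) : cycIco a b c ↔ (c = a ∧ a ≠ b) ∨ cycIoo a b c := by
  have ha := ZMod.val_lt a
  have hb := ZMod.val_lt b
  have hc := ZMod.val_lt c
  rw [J_iff, ← (ZMod.val_injective n).eq_iff, ne_eq, ← (ZMod.val_injective n).eq_iff]
  unfold cycIco
  rw [val_sub_eq, val_sub_eq]
  split_ifs <;> omega

theorem J_ne {a b c : ZMod n} (h : cycIoo a b c) : a ≠ b ∧ a ≠ c ∧ b ≠ c := by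
  rw [J_iff] at h
  refine ⟨?_, ?_, ?_⟩ <;> rintro rfl <;> omega

theorem J_total {a b c : ZMod n} (h1 : a ≠ b) (h2 : a ≠ c) (h3 : b ≠ c) :
    (cycIoo a b c ↔ ¬ cycIoo a c b) := by
  rw [ne_eq, ← (ZMod.val_injective n).eq_iff] at h1 h2 h3
  rw [J_iff, J_iff]; omega

theorem J_rot {a b c : ZMod n} : cycIoo a b c ↔ cycIoo b c a := by
  rw [J_iff, J_iff]; omega

/-- transitivity -/
theorem J_trans {a b c d : ZMod n} (h1 : cycIoo a b c) (h2 : cycIoo a c d) : cycIoo a b d := by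
  rw [J_iff] at *; omega

theorem J_trans2 {a b c d : ZMod n} (h1 : cycIoo a b c) (h2 : cycIoo a c d) : cycIoo d b c := by
  rw [J_iff] at *; omega

/-- splitting an interval `(a,b)` at `c` -/
theorem J_split {a b c : ZMod n} (h1 : cycIoo a b c) (d : ZMod n) :
    cycIoo a b d ↔ (cycIoo a c d ∨ d = c ∨ cycIoo c b d) := by
  rw [← (ZMod.val_injective n).eq_iff]
  rw [J_iff] at *; simp only [J_iff]; omega

theorem I_split {a b c : ZMod n} (h1 : cycIoo a b c) (d : ZMod n) :
    cycIco a b d ↔ (cycIco a c d ∨ cycIco c b d) := by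
  have := J_ne h1
  simp only [I_iff, J_split h1 d]; grind

theorem I_disj {a b c : ZMod n} (h1 : cycIoo a b c) (d : ZMod n) :
    ¬ (cycIco a c d ∧ cycIco c b d) := by
  simp only [I_iff, ← (ZMod.val_injective n).eq_iff]
  rw [J_iff] at *; simp only [J_iff]; omega

def EE (x : Equiv.Perm (ZMod n)) (a b : ZMod n) : Prop :=
  ∀ i, ¬ (cycIoo a b i ∧ cycIoo (x a) (x b) (x i))

theorem inj_ne (x : Equiv.Perm (ZMod n)) {a b : ZMod n} (h : a ≠ b) : x a ≠ x b :=
  fun h' => h (x.injective h')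

theorem sw_ne (x : Equiv.Perm (ZMod n)) {a b i : ZMod n} (h1 : i ≠ a) (h2 : i ≠ b) :
    (x * Equiv.swap a b) i = x i := by
  simp [Equiv.swap_apply_of_ne_of_ne h1 h2]
theorem sw_l (x : Equiv.Perm (ZMod n)) (a b : ZMod n) :
    (x * Equiv.swap a b) a = x b := by simp
theorem sw_r (x : Equiv.Perm (ZMod n)) (a b : ZMod n) :
    (x * Equiv.swap a b) b = x a := by simp

theorem J3 {a b c : ZMod n} (h1 : a ≠ b) (h2 : a ≠ c) (h3 : b ≠ c) :
    (cycIoo b c a ↔ cycIoo a b c) ∧ (cycIoo c a b ↔ cycIoo a b c) ∧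
    (cycIoo a c b ↔ ¬ cycIoo a b c) ∧ (cycIoo c b a ↔ ¬ cycIoo a b c) ∧
    (cycIoo b a c ↔ ¬ cycIoo a b c) := by
  rw [ne_eq, ← (ZMod.val_injective n).eq_iff] at h1 h2 h3
  simp only [J_iff]; omega

theorem EE3 (x y : Equiv.Perm (ZMod n)) (a b e : ZMod n) {u v t p q r : ZMod n}
    (hs : ∀ i, (i ≠ u ∧ i ≠ v ∧ i ≠ t) ↔ (i ≠ a ∧ i ≠ b ∧ i ≠ e))
    (hp : y u = p) (hq : y v = q) (hr : y t = r)
    (hi : ∀ i, i ≠ a → i ≠ b → i ≠ e → y i = x i) :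
    EE y u v ↔ ¬ (cycIoo u v t ∧ cycIoo p q r) ∧
      ∀ i, i ≠ a → i ≠ b → i ≠ e → ¬ (cycIoo u v i ∧ cycIoo p q (x i)) := by
  subst hp hq hr
  constructor
  · exact fun h => ⟨h t, fun i h1 h2 h3 => by rw [← hi i h1 h2 h3]; exact h i⟩
  · rintro ⟨h, h'⟩ i hh
    have := J_ne hh.1
    by_cases ht : i = t
    · subst ht; exact h hh
    · obtain ⟨h1, h2, h3⟩ := (hs i).1 ⟨by tauto, by tauto, ht⟩
      apply h' i h1 h2 h3
      rw [← hi i h1 h2 h3]; exact hh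

theorem and_all_congr {p q : Prop} {ι : Type*} {P Q : ι → Prop} (h : p ↔ q) (h' : p → ∀ i, (P i ↔ Q i)) :
    (p ∧ ∀ i, P i) ↔ (q ∧ ∀ i, Q i) := by
  constructor
  · rintro ⟨a, b⟩; exact ⟨h.1 a, fun i => (h' a i).1 (b i)⟩
  · rintro ⟨a, b⟩; exact ⟨h.2 a, fun i => (h' (h.2 a) i).2 (b i)⟩

theorem E_iff_gen {a b e : ZMod n} {C C' p1 p2 p3 p4 : Prop} {A1 A2 A3 A4 : ZMod n → Prop}
    (h : (C ∧ p1 ∧ p2) ↔ (C' ∧ p3 ∧ p4))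
    (h' : (C ∧ p1 ∧ p2) → ∀ i, i ≠ a → i ≠ b → i ≠ e → ((¬ A1 i ∧ ¬ A2 i) ↔ (¬ A3 i ∧ ¬ A4 i))) :
    (C ∧ (p1 ∧ ∀ i, i ≠ a → i ≠ b → i ≠ e → ¬ A1 i) ∧ (p2 ∧ ∀ i, i ≠ a → i ≠ b → i ≠ e → ¬ A2 i)) ↔
    (C' ∧ (p3 ∧ ∀ i, i ≠ a → i ≠ b → i ≠ e → ¬ A3 i) ∧ (p4 ∧ ∀ i, i ≠ a → i ≠ b → i ≠ e → ¬ A4 i)) := by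
  have := @and_all_congr (C ∧ p1 ∧ p2) (C' ∧ p3 ∧ p4) (ZMod n)
    (fun i => i ≠ a → i ≠ b → i ≠ e → (¬ A1 i ∧ ¬ A2 i)) (fun i => i ≠ a → i ≠ b → i ≠ e → (¬ A3 i ∧ ¬ A4 i)) h
    (fun hh i => by
      have := h' hh i
      tauto)
  constructor
  · rintro ⟨c, ⟨c1, c2⟩, c3, c4⟩
    obtain ⟨⟨d1, d2, d3⟩, d4⟩ := this.1 ⟨⟨c, c1, c3⟩, fun i i1 i2 i3 => ⟨c2 i i1 i2 i3, c4 i i1 i2 i3⟩⟩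
    exact ⟨d1, ⟨d2, fun i i1 i2 i3 => (d4 i i1 i2 i3).1⟩, d3, fun i i1 i2 i3 => (d4 i i1 i2 i3).2⟩
  · rintro ⟨c, ⟨c1, c2⟩, c3, c4⟩
    obtain ⟨⟨d1, d2, d3⟩, d4⟩ := this.2 ⟨⟨c, c1, c3⟩, fun i i1 i2 i3 => ⟨c2 i i1 i2 i3, c4 i i1 i2 i3⟩⟩
    exact ⟨d1, ⟨d2, fun i i1 i2 i3 => (d4 i i1 i2 i3).1⟩, d3, fun i i1 i2 i3 => (d4 i i1 i2 i3).2⟩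

theorem E_iff1 (x : Equiv.Perm (ZMod n)) {a b e : ZMod n} (n1 : a ≠ b) (n2 : a ≠ e) (n3 : b ≠ e) :
    (cycIoo a e b ∧ EE x a b ∧ EE (x * Equiv.swap a b) a e) ↔
    (cycIoo (x a) (x e) (x b) ∧ EE x b e ∧ EE (x * Equiv.swap b e) a b) := by
  have m1 := inj_ne x n1
  have m2 := inj_ne x n2
  have m3 := inj_ne x n3
  rw [EE3 x x a b e (u := a) (v := b) (t := e) (p := x a) (q := x b) (r := x e) (fun i => by clear n1 n2 n3 m1 m2 m3; tauto)
      rfl rfl rfl (fun _ _ _ _ => rfl),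
    EE3 x (x * Equiv.swap a b) a b e (u := a) (v := e) (t := b) (p := x b) (q := x e) (r := x a) (fun i => by clear n1 n2 n3 m1 m2 m3; tauto)
      (by simp [Equiv.swap_apply_of_ne_of_ne, n1, n2, n3, n1.symm, n2.symm, n3.symm]) (by simp [Equiv.swap_apply_of_ne_of_ne, n1, n2, n3, n1.symm, n2.symm, n3.symm]) (by simp [Equiv.swap_apply_of_ne_of_ne, n1, n2, n3, n1.symm, n2.symm, n3.symm]) (by intro i i1 i2 i3; simp [Equiv.swap_apply_of_ne_of_ne, i1, i2, i3]),
    EE3 x x a b e (u := b) (v := e) (t := a) (p := x b) (q := x e) (r := x a) (fun i => by clear n1 n2 n3 m1 m2 m3; tauto)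
      rfl rfl rfl (fun _ _ _ _ => rfl),
    EE3 x (x * Equiv.swap b e) a b e (u := a) (v := b) (t := e) (p := x a) (q := x e) (r := x b) (fun i => by clear n1 n2 n3 m1 m2 m3; tauto)
      (by simp [Equiv.swap_apply_of_ne_of_ne, n1, n2, n3, n1.symm, n2.symm, n3.symm]) (by simp [Equiv.swap_apply_of_ne_of_ne, n1, n2, n3, n1.symm, n2.symm, n3.symm]) (by simp [Equiv.swap_apply_of_ne_of_ne, n1, n2, n3, n1.symm, n2.symm, n3.symm]) (by intro i i1 i2 i3; simp [Equiv.swap_apply_of_ne_of_ne, i1, i2, i3])]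
  obtain ⟨c1, c2, c3, c4, c5⟩ := J3 n1 n2 n3
  obtain ⟨d1, d2, d3, d4, d5⟩ := J3 m1 m2 m3
  apply E_iff_gen
  · simp only [c1, c2, c3, c4, c5, d1, d2, d3, d4, d5]; grind
  · intro hh i ia ib ie
    have hc : cycIoo a e b := by simp only [c1, c2, c3, c4, c5, d1, d2, d3, d4, d5] at hh ⊢; grind
    have hr : cycIoo (x a) (x e) (x b) := by simp only [c1, c2, c3, c4, c5, d1, d2, d3, d4, d5] at hh ⊢; grind
    have f1 := J_split hc i
    have f2 := J_split hr (x i)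
    have g1 := inj_ne x ia
    have g2 := inj_ne x ib
    have g3 := inj_ne x ie
    clear c1 c2 c3 c4 c5 d1 d2 d3 d4 d5 hh hc hr m1 m2 m3 n1 n2 n3
    simp only [f1, f2]
    grind

theorem E_iff2 (x : Equiv.Perm (ZMod n)) {a b e : ZMod n} (n1 : a ≠ b) (n2 : a ≠ e) (n3 : b ≠ e) :
    (cycIoo a b e ∧ EE x a b ∧ EE (x * Equiv.swap a b) a e) ↔
    (cycIoo (x a) (x e) (x b) ∧ EE x a e ∧ EE (x * Equiv.swap a e) e b) := by
  have m1 := inj_ne x n1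
  have m2 := inj_ne x n2
  have m3 := inj_ne x n3
  rw [EE3 x x a b e (u := a) (v := b) (t := e) (p := x a) (q := x b) (r := x e) (fun i => by clear n1 n2 n3 m1 m2 m3; tauto)
      rfl rfl rfl (fun _ _ _ _ => rfl),
    EE3 x (x * Equiv.swap a b) a b e (u := a) (v := e) (t := b) (p := x b) (q := x e) (r := x a) (fun i => by clear n1 n2 n3 m1 m2 m3; tauto)
      (by simp [Equiv.swap_apply_of_ne_of_ne, n1, n2, n3, n1.symm, n2.symm, n3.symm]) (by simp [Equiv.swap_apply_of_ne_of_ne, n1, n2, n3, n1.symm, n2.symm, n3.symm]) (by simp [Equiv.swap_apply_of_ne_of_ne, n1, n2, n3, n1.symm, n2.symm, n3.symm]) (by intro i i1 i2 i3; simp [Equiv.swap_apply_of_ne_of_ne, i1, i2, i3]),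
    EE3 x x a b e (u := a) (v := e) (t := b) (p := x a) (q := x e) (r := x b) (fun i => by clear n1 n2 n3 m1 m2 m3; tauto)
      rfl rfl rfl (fun _ _ _ _ => rfl),
    EE3 x (x * Equiv.swap a e) a b e (u := e) (v := b) (t := a) (p := x a) (q := x b) (r := x e) (fun i => by clear n1 n2 n3 m1 m2 m3; tauto)
      (by simp [Equiv.swap_apply_of_ne_of_ne, n1, n2, n3, n1.symm, n2.symm, n3.symm]) (by simp [Equiv.swap_apply_of_ne_of_ne, n1, n2, n3, n1.symm, n2.symm, n3.symm]) (by simp [Equiv.swap_apply_of_ne_of_ne, n1, n2, n3, n1.symm, n2.symm, n3.symm]) (by intro i i1 i2 i3; simp [Equiv.swap_apply_of_ne_of_ne, i1, i2, i3])]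
  obtain ⟨c1, c2, c3, c4, c5⟩ := J3 n1 n2 n3
  obtain ⟨d1, d2, d3, d4, d5⟩ := J3 m1 m2 m3
  apply E_iff_gen
  · simp only [c1, c2, c3, c4, c5, d1, d2, d3, d4, d5]; grind
  · intro hh i ia ib ie
    have hc : cycIoo a b e := by simp only [c1, c2, c3, c4, c5, d1, d2, d3, d4, d5] at hh ⊢; grind
    have hr : cycIoo (x a) (x e) (x b) := by simp only [c1, c2, c3, c4, c5, d1, d2, d3, d4, d5] at hh ⊢; grind
    have f1 := J_split hc i
    have f2 := J_split hr (x i)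
    have g1 := inj_ne x ia
    have g2 := inj_ne x ib
    have g3 := inj_ne x ie
    clear c1 c2 c3 c4 c5 d1 d2 d3 d4 d5 hh hc hr m1 m2 m3 n1 n2 n3
    simp only [f1, f2]
    grind

theorem E_iff3 (x : Equiv.Perm (ZMod n)) {a b e : ZMod n} (n1 : a ≠ b) (n2 : a ≠ e) (n3 : b ≠ e) :
    (cycIoo e b a ∧ EE x a b ∧ EE (x * Equiv.swap a b) e b) ↔
    (cycIoo (x e) (x b) (x a) ∧ EE x e a ∧ EE (x * Equiv.swap e a) a b) := by
  have m1 := inj_ne x n1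
  have m2 := inj_ne x n2
  have m3 := inj_ne x n3
  rw [EE3 x x a b e (u := a) (v := b) (t := e) (p := x a) (q := x b) (r := x e) (fun i => by clear n1 n2 n3 m1 m2 m3; tauto)
      rfl rfl rfl (fun _ _ _ _ => rfl),
    EE3 x (x * Equiv.swap a b) a b e (u := e) (v := b) (t := a) (p := x e) (q := x a) (r := x b) (fun i => by clear n1 n2 n3 m1 m2 m3; tauto)
      (by simp [Equiv.swap_apply_of_ne_of_ne, n1, n2, n3, n1.symm, n2.symm, n3.symm]) (by simp [Equiv.swap_apply_of_ne_of_ne, n1, n2, n3, n1.symm, n2.symm, n3.symm]) (by simp [Equiv.swap_apply_of_ne_of_ne, n1, n2, n3, n1.symm, n2.symm, n3.symm]) (by intro i i1 i2 i3; simp [Equiv.swap_apply_of_ne_of_ne, i1, i2, i3]),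
    EE3 x x a b e (u := e) (v := a) (t := b) (p := x e) (q := x a) (r := x b) (fun i => by clear n1 n2 n3 m1 m2 m3; tauto)
      rfl rfl rfl (fun _ _ _ _ => rfl),
    EE3 x (x * Equiv.swap e a) a b e (u := a) (v := b) (t := e) (p := x e) (q := x b) (r := x a) (fun i => by clear n1 n2 n3 m1 m2 m3; tauto)
      (by simp [Equiv.swap_apply_of_ne_of_ne, n1, n2, n3, n1.symm, n2.symm, n3.symm]) (by simp [Equiv.swap_apply_of_ne_of_ne, n1, n2, n3, n1.symm, n2.symm, n3.symm]) (by simp [Equiv.swap_apply_of_ne_of_ne, n1, n2, n3, n1.symm, n2.symm, n3.symm]) (by intro i i1 i2 i3; simp [Equiv.swap_apply_of_ne_of_ne, i1, i2, i3])]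
  obtain ⟨c1, c2, c3, c4, c5⟩ := J3 n1 n2 n3
  obtain ⟨d1, d2, d3, d4, d5⟩ := J3 m1 m2 m3
  apply E_iff_gen
  · simp only [c1, c2, c3, c4, c5, d1, d2, d3, d4, d5]; grind
  · intro hh i ia ib ie
    have hc : cycIoo e b a := by simp only [c1, c2, c3, c4, c5, d1, d2, d3, d4, d5] at hh ⊢; grind
    have hr : cycIoo (x e) (x b) (x a) := by simp only [c1, c2, c3, c4, c5, d1, d2, d3, d4, d5] at hh ⊢; grind
    have f1 := J_split hc i
    have f2 := J_split hr (x i)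
    have g1 := inj_ne x ia
    have g2 := inj_ne x ib
    have g3 := inj_ne x ie
    clear c1 c2 c3 c4 c5 d1 d2 d3 d4 d5 hh hc hr m1 m2 m3 n1 n2 n3
    simp only [f1, f2]
    grind

theorem E_iff4 (x : Equiv.Perm (ZMod n)) {a b e : ZMod n} (n1 : a ≠ b) (n2 : a ≠ e) (n3 : b ≠ e) :
    (cycIoo a b e ∧ EE x a b ∧ EE (x * Equiv.swap a b) e b) ↔
    (cycIoo (x e) (x b) (x a) ∧ EE x e b ∧ EE (x * Equiv.swap e b) a e) := by
  have m1 := inj_ne x n1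
  have m2 := inj_ne x n2
  have m3 := inj_ne x n3
  rw [EE3 x x a b e (u := a) (v := b) (t := e) (p := x a) (q := x b) (r := x e) (fun i => by clear n1 n2 n3 m1 m2 m3; tauto)
      rfl rfl rfl (fun _ _ _ _ => rfl),
    EE3 x (x * Equiv.swap a b) a b e (u := e) (v := b) (t := a) (p := x e) (q := x a) (r := x b) (fun i => by clear n1 n2 n3 m1 m2 m3; tauto)
      (by simp [Equiv.swap_apply_of_ne_of_ne, n1, n2, n3, n1.symm, n2.symm, n3.symm]) (by simp [Equiv.swap_apply_of_ne_of_ne, n1, n2, n3, n1.symm, n2.symm, n3.symm]) (by simp [Equiv.swap_apply_of_ne_of_ne, n1, n2, n3, n1.symm, n2.symm, n3.symm]) (by intro i i1 i2 i3; simp [Equiv.swap_apply_of_ne_of_ne, i1, i2, i3]),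
    EE3 x x a b e (u := e) (v := b) (t := a) (p := x e) (q := x b) (r := x a) (fun i => by clear n1 n2 n3 m1 m2 m3; tauto)
      rfl rfl rfl (fun _ _ _ _ => rfl),
    EE3 x (x * Equiv.swap e b) a b e (u := a) (v := e) (t := b) (p := x a) (q := x b) (r := x e) (fun i => by clear n1 n2 n3 m1 m2 m3; tauto)
      (by simp [Equiv.swap_apply_of_ne_of_ne, n1, n2, n3, n1.symm, n2.symm, n3.symm]) (by simp [Equiv.swap_apply_of_ne_of_ne, n1, n2, n3, n1.symm, n2.symm, n3.symm]) (by simp [Equiv.swap_apply_of_ne_of_ne, n1, n2, n3, n1.symm, n2.symm, n3.symm]) (by intro i i1 i2 i3; simp [Equiv.swap_apply_of_ne_of_ne, i1, i2, i3])]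
  obtain ⟨c1, c2, c3, c4, c5⟩ := J3 n1 n2 n3
  obtain ⟨d1, d2, d3, d4, d5⟩ := J3 m1 m2 m3
  apply E_iff_gen
  · simp only [c1, c2, c3, c4, c5, d1, d2, d3, d4, d5]; grind
  · intro hh i ia ib ie
    have hc : cycIoo a b e := by simp only [c1, c2, c3, c4, c5, d1, d2, d3, d4, d5] at hh ⊢; grind
    have hr : cycIoo (x e) (x b) (x a) := by simp only [c1, c2, c3, c4, c5, d1, d2, d3, d4, d5] at hh ⊢; grind
    have f1 := J_split hc i
    have f2 := J_split hr (x i)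
    have g1 := inj_ne x ia
    have g2 := inj_ne x ib
    have g3 := inj_ne x ie
    clear c1 c2 c3 c4 c5 d1 d2 d3 d4 d5 hh hc hr m1 m2 m3 n1 n2 n3
    simp only [f1, f2]
    grind

end comb
section dsq
set_option linter.unusedSectionVars false
set_option linter.unusedSimpArgs false
set_option linter.unusedVariables false
variable [NeZero n] {R : Type*} [CommRing R]

noncomputable def Wt (w : ZMod n → ZMod n → R) (a b p q : ZMod n) : R :=
  ∏ i ∈ Finset.univ.filter (cycIco a b), ∏ j ∈ Finset.univ.filter (cycIco p q), w i j

theorem prod_I_split {M : Type*} [CommMonoid M] (f : ZMod n → M) {a b c : ZMod n} (h : cycIoo a b c) :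
    ∏ i ∈ Finset.univ.filter (cycIco a b), f i =
    (∏ i ∈ Finset.univ.filter (cycIco a c), f i) * ∏ i ∈ Finset.univ.filter (cycIco c b), f i := by
  rw [← Finset.prod_union]
  · congr 1
    ext d
    simp [I_split h d]
  · rw [Finset.disjoint_left]
    intro d h1 h2
    simp only [Finset.mem_filter, Finset.mem_univ, true_and] at h1 h2
    exact I_disj h d ⟨h1, h2⟩

theorem prod_I_full {M : Type*} [CommMonoid M] (f : ZMod n → M) {a b : ZMod n} (h : a ≠ b) :
    (∏ i ∈ Finset.univ.filter (cycIco a b), f i) * (∏ i ∈ Finset.univ.filter (cycIco b a), f i) =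
    ∏ i, f i := by
  have key : ∀ d, cycIco b a d ↔ ¬ cycIco a b d := by
    intro d
    rw [ne_eq, ← (ZMod.val_injective n).eq_iff] at h
    simp only [I_iff, J_iff, ne_eq, ← (ZMod.val_injective n).eq_iff]
    omega
  rw [← Finset.prod_filter_mul_prod_filter_not Finset.univ (cycIco a b)]
  congr 1
  apply Finset.prod_congr _ fun _ _ => rfl
  ext d
  simp [key]

theorem Wt_col (w : ZMod n → ZMod n → R) {a b c : ZMod n} (p q : ZMod n) (h : cycIoo a b c) :
    Wt w a b p q = Wt w a c p q * Wt w c b p q := prod_I_split _ h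

theorem Wt_row (w : ZMod n → ZMod n → R) {p q r : ZMod n} (a b : ZMod n) (h : cycIoo p q r) :
    Wt w a b p q = Wt w a b p r * Wt w a b r q := by
  unfold Wt
  rw [← Finset.prod_mul_distrib]
  exact Finset.prod_congr rfl fun i _ => prod_I_split _ h

noncomputable def VV (w : ZMod n → ZMod n → R) (x : Equiv.Perm (ZMod n)) (a b : ZMod n) : R :=
  if a ≠ b ∧ EE x a b then Wt w a b (x a) (x b) else 0

noncomputable def FF (w : ZMod n → ZMod n → R) (x z : Equiv.Perm (ZMod n)) (a b c d : ZMod n) : R :=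
  if z = x * Equiv.swap a b * Equiv.swap c d then VV w x a b * VV w (x * Equiv.swap a b) c d else 0

theorem FF_eq (w : ZMod n → ZMod n → R) (x z : Equiv.Perm (ZMod n)) {a b c d : ZMod n}
    (h1 : a ≠ b) (h2 : c ≠ d) (C : Prop) :
    (if C then FF w x z a b c d else 0) =
      if (C ∧ EE x a b ∧ EE (x * Equiv.swap a b) c d) then
        (if z = x * Equiv.swap a b * Equiv.swap c d then
          Wt w a b (x a) (x b) * Wt w c d ((x * Equiv.swap a b) c) ((x * Equiv.swap a b) d) else 0) else 0 := by
  unfold FF VV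
  split_ifs <;> first | rfl | (simp; done) | (exfalso; tauto)

theorem swp (x : Equiv.Perm (ZMod n)) {a b e : ZMod n} (n1 : a ≠ b) (n2 : a ≠ e) (n3 : b ≠ e) :
    x * Equiv.swap a b * Equiv.swap a e = x * Equiv.swap b e * Equiv.swap a b := by
  ext i
  simp only [Equiv.Perm.mul_apply, Equiv.swap_apply_def]
  grind

theorem L1 (w : ZMod n → ZMod n → R) (x z : Equiv.Perm (ZMod n)) (a b e : ZMod n) :
    (if cycIoo a e b then FF w x z a b a e else 0) =
    (if cycIoo (x a) (x e) (x b) then FF w x z b e a b else 0) := by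
  by_cases hd : a ≠ b ∧ a ≠ e ∧ b ≠ e
  swap
  · rw [if_neg, if_neg]
    · intro h; have := J_ne h
      exact hd ⟨fun h => this.2.1 (by rw [h]), fun h => this.1 (by rw [h]), fun h => this.2.2 (by rw [h])⟩
    · intro h; have := J_ne h
      exact hd ⟨this.2.1, this.1, this.2.2.symm⟩
  obtain ⟨n1, n2, n3⟩ := hd
  have key := E_iff1 x n1 n2 n3
  rw [FF_eq w x z n1 n2, FF_eq w x z n3 n1]
  by_cases hh : cycIoo a e b ∧ EE x a b ∧ EE (x * Equiv.swap a b) a e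
  · have hh' := key.1 hh
    rw [if_pos hh, if_pos hh', swp x n1 n2 n3]
    congr 1
    simp only [Equiv.Perm.mul_apply, Equiv.swap_apply_left, Equiv.swap_apply_right,
      Equiv.swap_apply_of_ne_of_ne n1 n2, Equiv.swap_apply_of_ne_of_ne n2.symm n3.symm]
    rw [Wt_row w a b hh'.1, Wt_col w _ _ hh.1]
    ring
  · rw [if_neg hh, if_neg (by rwa [← key])]

theorem L2 (w : ZMod n → ZMod n → R) (x z : Equiv.Perm (ZMod n)) (a b e : ZMod n) :
    (if cycIoo a b e then FF w x z a b a e else 0) =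
    (if cycIoo (x a) (x e) (x b) then FF w x z a e e b else 0) := by
  by_cases hd : a ≠ b ∧ a ≠ e ∧ b ≠ e
  swap
  · rw [if_neg, if_neg]
    · intro h; have := J_ne h
      exact hd ⟨fun h => this.2.1 (by rw [h]), fun h => this.1 (by rw [h]), fun h => this.2.2 (by rw [h])⟩
    · intro h; have := J_ne h
      exact hd ⟨this.1, this.2.1, this.2.2⟩
  obtain ⟨n1, n2, n3⟩ := hd
  have key := E_iff2 x n1 n2 n3
  rw [FF_eq w x z n1 n2, FF_eq w x z n2 n3.symm]
  by_cases hh : cycIoo a b e ∧ EE x a b ∧ EE (x * Equiv.swap a b) a e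
  · have hh' := key.1 hh
    have sw : x * Equiv.swap a b * Equiv.swap a e = x * Equiv.swap a e * Equiv.swap e b := by
      ext i
      simp only [Equiv.Perm.mul_apply, Equiv.swap_apply_def]
      grind
    rw [if_pos hh, if_pos hh', sw]
    congr 1
    simp only [Equiv.Perm.mul_apply, Equiv.swap_apply_left, Equiv.swap_apply_right,
      Equiv.swap_apply_of_ne_of_ne n1 n2, Equiv.swap_apply_of_ne_of_ne n2.symm n3.symm,
      Equiv.swap_apply_of_ne_of_ne n1.symm n3]
    rw [Wt_row w a e hh'.1, Wt_col w _ _ hh.1]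
    ring
  · rw [if_neg hh, if_neg (by rwa [← key])]

theorem L3 (w : ZMod n → ZMod n → R) (x z : Equiv.Perm (ZMod n)) (a b e : ZMod n) :
    (if cycIoo e b a then FF w x z a b e b else 0) =
    (if cycIoo (x e) (x b) (x a) then FF w x z e a a b else 0) := by
  by_cases hd : a ≠ b ∧ a ≠ e ∧ b ≠ e
  swap
  · rw [if_neg, if_neg]
    · intro h; have := J_ne h
      exact hd ⟨fun h => this.2.2 (by rw [h]), fun h => this.2.1 (by rw [h]), fun h => this.1 (by rw [h])⟩
    · intro h; have := J_ne h
      exact hd ⟨this.2.2.symm, this.2.1.symm, this.1.symm⟩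
  obtain ⟨n1, n2, n3⟩ := hd
  have key := E_iff3 x n1 n2 n3
  rw [FF_eq w x z n1 n3.symm, FF_eq w x z n2.symm n1]
  by_cases hh : cycIoo e b a ∧ EE x a b ∧ EE (x * Equiv.swap a b) e b
  · have hh' := key.1 hh
    have sw : x * Equiv.swap a b * Equiv.swap e b = x * Equiv.swap e a * Equiv.swap a b := by
      ext i
      simp only [Equiv.Perm.mul_apply, Equiv.swap_apply_def]
      grind
    rw [if_pos hh, if_pos hh', sw]
    congr 1
    simp only [Equiv.Perm.mul_apply, Equiv.swap_apply_left, Equiv.swap_apply_right,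
      Equiv.swap_apply_of_ne_of_ne n1 n2, Equiv.swap_apply_of_ne_of_ne n2.symm n3.symm,
      Equiv.swap_apply_of_ne_of_ne n1.symm n3, Equiv.swap_apply_of_ne_of_ne n3 n1.symm]
    rw [Wt_row w a b hh'.1, Wt_col w _ _ hh.1]
    ring
  · rw [if_neg hh, if_neg (by rwa [← key])]

theorem L4 (w : ZMod n → ZMod n → R) (x z : Equiv.Perm (ZMod n)) (a b e : ZMod n) :
    (if cycIoo a b e then FF w x z a b e b else 0) =
    (if cycIoo (x e) (x b) (x a) then FF w x z e b a e else 0) := by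
  by_cases hd : a ≠ b ∧ a ≠ e ∧ b ≠ e
  swap
  · rw [if_neg, if_neg]
    · intro h; have := J_ne h
      exact hd ⟨fun h => this.2.2 (by rw [h]), fun h => this.2.1 (by rw [h]), fun h => this.1 (by rw [h])⟩
    · intro h; have := J_ne h
      exact hd ⟨this.1, this.2.1, this.2.2⟩
  obtain ⟨n1, n2, n3⟩ := hd
  have key := E_iff4 x n1 n2 n3
  rw [FF_eq w x z n1 n3.symm, FF_eq w x z n3.symm n2]
  by_cases hh : cycIoo a b e ∧ EE x a b ∧ EE (x * Equiv.swap a b) e b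
  · have hh' := key.1 hh
    have sw : x * Equiv.swap a b * Equiv.swap e b = x * Equiv.swap e b * Equiv.swap a e := by
      ext i
      simp only [Equiv.Perm.mul_apply, Equiv.swap_apply_def]
      grind
    rw [if_pos hh, if_pos hh', sw]
    congr 1
    simp only [Equiv.Perm.mul_apply, Equiv.swap_apply_left, Equiv.swap_apply_right,
      Equiv.swap_apply_of_ne_of_ne n1 n2, Equiv.swap_apply_of_ne_of_ne n2.symm n3.symm,
      Equiv.swap_apply_of_ne_of_ne n1.symm n3, Equiv.swap_apply_of_ne_of_ne n2 n1]
    rw [Wt_row w e b hh'.1, Wt_col w _ _ hh.1]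
    ring
  · rw [if_neg hh, if_neg (by rwa [← key])]

theorem X1 {a b c d : ZMod n} (h : cycIoo c d a) (h' : ¬ cycIoo c d b) (hb : d ≠ b) :
    cycIoo a b d := by
  rw [ne_eq, ← (ZMod.val_injective n).eq_iff] at hb
  rw [J_iff] at *; omega

theorem X2 {a b c d : ZMod n} (h : cycIoo c d b) (h' : ¬ cycIoo c d a) (hb : c ≠ a) :
    cycIoo a b c := by
  rw [ne_eq, ← (ZMod.val_injective n).eq_iff] at hb
  rw [J_iff] at *; omega

theorem disj_aux (x : Equiv.Perm (ZMod n)) {a b c d : ZMod n} (h1 : a ≠ b) (h2 : c ≠ d)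
    (h3 : c ≠ a) (h4 : c ≠ b) (h5 : d ≠ a) (h6 : d ≠ b)
    (hE : EE x a b) (hE' : EE (x * Equiv.swap a b) c d) :
    EE x c d ∧ EE (x * Equiv.swap c d) a b := by
  have pa := hE' a
  have pb := hE' b
  have pc := hE c
  have pd := hE d
  rw [sw_ne x h3 h4, sw_ne x h5 h6] at pa pb
  rw [sw_l] at pa
  rw [sw_r] at pb
  have k3 := inj_ne x h3
  have k4 := inj_ne x h4
  have k5 := inj_ne x h5
  have k6 := inj_ne x h6
  constructor
  · rintro i ⟨g1, g2⟩
    by_cases ia : i = a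
    · subst ia
      exact pd ⟨X1 g1 (fun h => pb ⟨h, g2⟩) h6, X1 g2 (fun h => pa ⟨g1, h⟩) k6⟩
    by_cases ib : i = b
    · subst ib
      exact pc ⟨X2 g1 (fun h => pa ⟨h, g2⟩) h3, X2 g2 (fun h => pb ⟨g1, h⟩) k3⟩
    apply hE' i
    rw [sw_ne x h3 h4, sw_ne x h5 h6, sw_ne x ia ib]
    exact ⟨g1, g2⟩
  · intro i
    rw [sw_ne x h3.symm h5.symm, sw_ne x h4.symm h6.symm]
    rintro ⟨g1, g2⟩
    by_cases ia : i = c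
    · subst ia
      rw [sw_l] at g2
      exact pb ⟨X1 g1 (fun h => pd ⟨h, g2⟩) h6.symm, X2 g2 (fun h => pc ⟨g1, h⟩) k3.symm⟩
    by_cases ib : i = d
    · subst ib
      rw [sw_r] at g2
      exact pa ⟨X2 g1 (fun h => pc ⟨h, g2⟩) h3.symm, X1 g2 (fun h => pd ⟨g1, h⟩) k6.symm⟩
    rw [sw_ne x ia ib] at g2
    exact hE i ⟨g1, g2⟩

theorem Ldisj (w : ZMod n → ZMod n → R) (x z : Equiv.Perm (ZMod n)) (a b c d : ZMod n)
    (h1 : a ≠ b) (h2 : c ≠ d)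
    (h3 : c ≠ a) (h4 : c ≠ b) (h5 : d ≠ a) (h6 : d ≠ b) : FF w x z a b c d = FF w x z c d a b := by
  have e1 := FF_eq w x z h1 h2 True
  have e2 := FF_eq w x z h2 h1 True
  rw [if_pos trivial] at e1 e2
  rw [e1, e2]
  have sw : x * Equiv.swap a b * Equiv.swap c d = x * Equiv.swap c d * Equiv.swap a b := by
    ext i
    simp only [Equiv.Perm.mul_apply, Equiv.swap_apply_def]
    grind
  have key : (EE x a b ∧ EE (x * Equiv.swap a b) c d) ↔ (EE x c d ∧ EE (x * Equiv.swap c d) a b) :=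
    ⟨fun h => disj_aux x h1 h2 h3 h4 h5 h6 h.1 h.2,
     fun h => disj_aux x h2 h1 h3.symm h5.symm h4.symm h6.symm h.1 h.2⟩
  simp only [true_and, key, sw, sw_ne x h3 h4, sw_ne x h5 h6, sw_ne x h3.symm h5.symm, sw_ne x h4.symm h6.symm]
  rw [mul_comm]

theorem noJ (hn : 2 ≤ n) {a b : ZMod n} (h : a ≠ b) : (∀ i, ¬ cycIoo a b i) ↔ b = a + 1 := by
  have : Fact (1 < n) := ⟨hn⟩
  constructor
  · intro hi
    by_contra hb
    apply hi (a + 1)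
    have h1 : (b - a).val ≠ 0 := by
      rw [ne_eq, ZMod.val_eq_zero]; intro h'; exact h (sub_eq_zero.1 h').symm
    have h2 : (b - a).val ≠ 1 := by
      intro h'
      apply hb
      rw [← ZMod.val_one n] at h'
      rw [← ZMod.val_injective n h']; ring
    unfold cycIoo
    rw [add_sub_cancel_left, ZMod.val_one]
    omega
  · rintro rfl i
    unfold cycIoo
    rw [add_sub_cancel_left, ZMod.val_one]
    omega

theorem I_succ (hn : 2 ≤ n) (a i : ZMod n) : cycIco a (a + 1) i ↔ i = a := by
  have : Fact (1 < n) := ⟨hn⟩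
  unfold cycIco
  rw [add_sub_cancel_left, ZMod.val_one, Nat.lt_one_iff, ZMod.val_eq_zero, sub_eq_zero]

theorem prod_I_succ {M : Type*} [CommMonoid M] (f : ZMod n → M) (hn : 2 ≤ n) (a : ZMod n) :
    ∏ i ∈ Finset.univ.filter (cycIco a (a + 1)), f i = f a := by
  rw [Finset.prod_eq_single a]
  · intro i hi; simp [I_succ hn] at hi; tauto
  · simp [I_succ hn]

theorem Lsame1 (w : ZMod n → ZMod n → R) (x z : Equiv.Perm (ZMod n)) (hn : 2 ≤ n) {a b : ZMod n} (h : a ≠ b) :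
    FF w x z a b a b = if b = a + 1 then (if z = x then ∏ j, w a j else 0) else 0 := by
  have e1 := FF_eq w x z h h True
  rw [if_pos trivial] at e1
  rw [e1]
  have key : (True ∧ EE x a b ∧ EE (x * Equiv.swap a b) a b) ↔ b = a + 1 := by
    rw [← noJ hn h]
    constructor
    · rintro ⟨-, h1, h2⟩ i hi
      have := J_ne hi
      have p1 := h1 i
      have p2 := h2 i
      rw [sw_l, sw_r, sw_ne x (by tauto) (by tauto)] at p2
      have t := J3 (inj_ne x h) (inj_ne x this.2.1) (inj_ne x this.2.2)
      tauto
    · intro hi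
      exact ⟨trivial, fun i h => hi i h.1, fun i h => hi i h.1⟩
  simp only [key, mul_assoc, Equiv.swap_mul_self, mul_one, sw_l, sw_r]
  split_ifs with hb hz
  · subst hb
    unfold Wt
    rw [prod_I_succ _ hn, prod_I_succ _ hn, prod_I_full _ (inj_ne x h)]
  all_goals rfl

theorem Lsame2 (w : ZMod n → ZMod n → R) (x z : Equiv.Perm (ZMod n)) (hn : 2 ≤ n) {a b : ZMod n} (h : a ≠ b) :
    FF w x z a b b a = if x b = x a + 1 then (if z = x then ∏ i, w i (x a) else 0) else 0 := by
  have e1 := FF_eq w x z h h.symm True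
  rw [if_pos trivial] at e1
  rw [e1]
  have key : (True ∧ EE x a b ∧ EE (x * Equiv.swap a b) b a) ↔ x b = x a + 1 := by
    rw [← noJ hn (inj_ne x h)]
    constructor
    · rintro ⟨-, h1, h2⟩ i hi
      obtain ⟨i, rfl⟩ := x.surjective i
      have := J_ne hi
      have q1 : a ≠ i := by rintro rfl; tauto
      have q2 : b ≠ i := by rintro rfl; tauto
      have p1 := h1 i
      have p2 := h2 i
      rw [sw_l, sw_r, sw_ne x (by tauto) (by tauto)] at p2
      have t := J3 h q1 q2
      tauto
    · intro hi
      refine ⟨trivial, fun i h => hi _ h.2, fun i => ?_⟩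
      rw [sw_l, sw_r]
      exact fun h => hi _ h.2
  rw [Equiv.swap_comm b a]
  simp only [key, mul_assoc, Equiv.swap_mul_self, mul_one, sw_l, sw_r]
  split_ifs with hb hz
  · unfold Wt
    rw [prod_I_full _ h, hb]
    exact Finset.prod_congr rfl fun i _ => prod_I_succ _ hn _
  all_goals rfl

theorem sum_if_ne (f : ZMod n → ZMod n → R) (g : ZMod n → ZMod n) (hg : ∀ a, a ≠ g a) (v : ZMod n → R)
    (hf : ∀ a b, a ≠ b → f a b = if b = g a then v a else 0) (hf0 : ∀ a, f a a = 0) :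
    ∑ a, ∑ b, f a b = ∑ a, v a := by
  refine Finset.sum_congr rfl fun a _ => ?_
  rw [Finset.sum_eq_single (g a)]
  · rw [hf _ _ (hg a), if_pos rfl]
  · intro b _ hb
    by_cases h : a = b
    · subst h; exact hf0 _
    · rw [hf _ _ h, if_neg hb]
  · simp

theorem FF_self1 (w : ZMod n → ZMod n → R) (x z : Equiv.Perm (ZMod n)) (a c d : ZMod n) : FF w x z a a c d = 0 := by
  simp [FF, VV]
theorem FF_self2 (w : ZMod n → ZMod n → R) (x z : Equiv.Perm (ZMod n)) (a b c : ZMod n) : FF w x z a b c c = 0 := by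
  simp [FF, VV]

theorem sum_same1 (w : ZMod n → ZMod n → R) (x z : Equiv.Perm (ZMod n)) (hn : 2 ≤ n) :
    ∑ a, ∑ b, FF w x z a b a b = if z = x then ∑ a, ∏ j, w a j else 0 := by
  have : Fact (1 < n) := ⟨hn⟩
  rw [sum_if_ne _ (fun a => a + 1) (by simp) _ (fun a b h => Lsame1 w x z hn h) (fun a => FF_self1 ..)]
  split_ifs <;> simp

theorem sum_same2 (w : ZMod n → ZMod n → R) (x z : Equiv.Perm (ZMod n)) (hn : 2 ≤ n) :
    ∑ a, ∑ b, FF w x z a b b a = if z = x then ∑ j, ∏ i, w i j else 0 := by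
  have : Fact (1 < n) := ⟨hn⟩
  rw [sum_if_ne (fun a b => FF w x z a b b a) (fun a => x.symm (x a + 1)) (fun a h => ?_) (fun a => if z = x then ∏ i, w i (x a) else 0)
    (fun a b h => ?_) (fun a => FF_self1 ..)]
  · split_ifs
    · exact Equiv.sum_comp x (fun j => ∏ i, w i j)
    · simp
  · have := congrArg x h
    simp at this
  · rw [Lsame2 w x z hn h]
    simp only [Equiv.eq_symm_apply]

theorem sum_disj (w : ZMod n → ZMod n → R) (x z : Equiv.Perm (ZMod n)) (h2 : ∀ r : R, r + r = 0) :
    ∑ a, ∑ b, ∑ c, ∑ d, (if c ≠ a ∧ c ≠ b ∧ d ≠ a ∧ d ≠ b then FF w x z a b c d else 0) = 0 := by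
  have e : ∑ a, ∑ b, ∑ c, ∑ d, (if c ≠ a ∧ c ≠ b ∧ d ≠ a ∧ d ≠ b then FF w x z a b c d else 0)
     = ∑ p : (ZMod n × ZMod n) × (ZMod n × ZMod n),
      (if p.2.1 ≠ p.1.1 ∧ p.2.1 ≠ p.1.2 ∧ p.2.2 ≠ p.1.1 ∧ p.2.2 ≠ p.1.2 then FF w x z p.1.1 p.1.2 p.2.1 p.2.2 else 0) := by
    simp only [Fintype.sum_prod_type]
  rw [e]
  apply Finset.sum_involution (fun p _ => Prod.swap p)
  · rintro ⟨⟨a, b⟩, ⟨c, d⟩⟩ -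
    simp only [Prod.fst_swap, Prod.snd_swap]
    by_cases h : c ≠ a ∧ c ≠ b ∧ d ≠ a ∧ d ≠ b
    · rw [if_pos h, if_pos (by tauto)]
      by_cases hab : a = b
      · subst hab; simp [FF_self1, FF_self2]
      by_cases hcd : c = d
      · subst hcd; simp [FF_self1, FF_self2]
      rw [Ldisj w x z a b c d hab hcd h.1 h.2.1 h.2.2.1 h.2.2.2, h2]
    · rw [if_neg h, if_neg (by tauto), add_zero]
  · rintro ⟨⟨a, b⟩, ⟨c, d⟩⟩ - h1 h
    simp only [Prod.swap, Prod.mk.injEq] at h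
    simp [h.1.1] at h1
  · simp
  · simp

theorem split_F (F : ZMod n → ZMod n → ZMod n → ZMod n → R)
    (h0 : ∀ a c d, F a a c d = 0) (h1 : ∀ a b c, F a b c c = 0) :
    ∑ a, ∑ b, ∑ c, ∑ d, F a b c d =
     ∑ a, ∑ b, ∑ c, ∑ d, (if c ≠ a ∧ c ≠ b ∧ d ≠ a ∧ d ≠ b then F a b c d else 0)
     + ∑ a, ∑ b, F a b a b + ∑ a, ∑ b, F a b b a
     + (∑ a, ∑ b, ∑ e, (if a ≠ b ∧ a ≠ e ∧ b ≠ e then F a b a e else 0)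
     + ∑ a, ∑ b, ∑ e, (if a ≠ b ∧ a ≠ e ∧ b ≠ e then F a b b e else 0)
     + ∑ a, ∑ b, ∑ e, (if a ≠ b ∧ a ≠ e ∧ b ≠ e then F a b e a else 0)
     + ∑ a, ∑ b, ∑ e, (if a ≠ b ∧ a ≠ e ∧ b ≠ e then F a b e b else 0)) := by
  simp only [← Finset.sum_add_distrib]
  refine Finset.sum_congr rfl fun a _ => Finset.sum_congr rfl fun b _ => ?_
  by_cases hab : a = b
  · subst hab; simp [h0]
  have e : ∀ c d, F a b c d = (if c ≠ a ∧ c ≠ b ∧ d ≠ a ∧ d ≠ b then F a b c d else 0)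
      + (if c = a then (if d = b then F a b a b else 0) else 0)
      + (if c = b then (if d = a then F a b b a else 0) else 0)
      + ((if c = a then (if a ≠ b ∧ a ≠ d ∧ b ≠ d then F a b a d else 0) else 0)
      + (if c = b then (if a ≠ b ∧ a ≠ d ∧ b ≠ d then F a b b d else 0) else 0)
      + (if d = a then (if a ≠ b ∧ a ≠ c ∧ b ≠ c then F a b c a else 0) else 0)
      + (if d = b then (if a ≠ b ∧ a ≠ c ∧ b ≠ c then F a b c b else 0) else 0)) := by
    intro c d
    by_cases hcd : c = d
    · subst hcd
      grind
    by_cases c1 : c = a <;> by_cases c2 : c = b <;> by_cases d1 : d = a <;> by_cases d2 : d = b <;> grind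
  rw [Finset.sum_congr rfl fun c _ => Finset.sum_congr rfl fun d _ => e c d]
  simp only [Finset.sum_add_distrib]
  have hc : ∀ (u : ZMod n) (G : ZMod n → R), ∑ c, ∑ d, (if c = u then G d else 0) = ∑ d, G d := by
    intro u G
    rw [Finset.sum_comm]; simp
  simp only [hc]
  simp

theorem sum_three (w : ZMod n → ZMod n → R) (x z : Equiv.Perm (ZMod n)) (h2 : ∀ r : R, r + r = 0) :
    (∑ a, ∑ b, ∑ e, (if a ≠ b ∧ a ≠ e ∧ b ≠ e then FF w x z a b a e else 0)
     + ∑ a, ∑ b, ∑ e, (if a ≠ b ∧ a ≠ e ∧ b ≠ e then FF w x z a b b e else 0)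
     + ∑ a, ∑ b, ∑ e, (if a ≠ b ∧ a ≠ e ∧ b ≠ e then FF w x z a b e a else 0)
     + ∑ a, ∑ b, ∑ e, (if a ≠ b ∧ a ≠ e ∧ b ≠ e then FF w x z a b e b else 0)) = 0 := by
  have t1 : ∀ a b e : ZMod n, (if a ≠ b ∧ a ≠ e ∧ b ≠ e then FF w x z a b a e else 0) =
      (if cycIoo a e b then FF w x z a b a e else 0) + (if cycIoo a b e then FF w x z a b a e else 0) := by
    intro a b e
    by_cases h : a ≠ b ∧ a ≠ e ∧ b ≠ e
    · have := J3 h.1 h.2.1 h.2.2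
      rw [if_pos h]
      by_cases hj : cycIoo a b e <;> simp [this, hj]
    · have h1 : ¬ cycIoo a e b := fun hj => h (by have := J_ne hj; tauto)
      have h1' : ¬ cycIoo a b e := fun hj => h (by have := J_ne hj; tauto)
      simp [h, h1, h1']
  have t4 : ∀ a b e : ZMod n, (if a ≠ b ∧ a ≠ e ∧ b ≠ e then FF w x z a b e b else 0) =
      (if cycIoo e b a then FF w x z a b e b else 0) + (if cycIoo a b e then FF w x z a b e b else 0) := by
    intro a b e
    by_cases h : a ≠ b ∧ a ≠ e ∧ b ≠ e
    · have := J3 h.1 h.2.1 h.2.2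
      rw [if_pos h]
      by_cases hj : cycIoo a b e <;> simp [this, hj]
    · have h1 : ¬ cycIoo e b a := fun hj => h (by have := J_ne hj; tauto)
      have h1' : ¬ cycIoo a b e := fun hj => h (by have := J_ne hj; tauto)
      simp [h, h1, h1']
  have t2 : ∀ a b e : ZMod n, (if a ≠ b ∧ a ≠ e ∧ b ≠ e then FF w x z a b b e else 0) =
      (if cycIoo (x a) (x b) (x e) then FF w x z a b b e else 0) + (if cycIoo (x a) (x e) (x b) then FF w x z a b b e else 0) := by
    intro a b e
    by_cases h : a ≠ b ∧ a ≠ e ∧ b ≠ e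
    · have := J3 (inj_ne x h.1) (inj_ne x h.2.1) (inj_ne x h.2.2)
      rw [if_pos h]
      by_cases hj : cycIoo (x a) (x b) (x e) <;> simp [this, hj]
    · have h1 : ¬ cycIoo (x a) (x b) (x e) := fun hj => h (by have := J_ne hj; simp only [ne_eq, x.injective.eq_iff] at this; tauto)
      have h1' : ¬ cycIoo (x a) (x e) (x b) := fun hj => h (by have := J_ne hj; simp only [ne_eq, x.injective.eq_iff] at this; tauto)
      simp [h, h1, h1']
  have t3 : ∀ a b e : ZMod n, (if a ≠ b ∧ a ≠ e ∧ b ≠ e then FF w x z a b e a else 0) =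
      (if cycIoo (x e) (x b) (x a) then FF w x z a b e a else 0) + (if cycIoo (x a) (x b) (x e) then FF w x z a b e a else 0) := by
    intro a b e
    by_cases h : a ≠ b ∧ a ≠ e ∧ b ≠ e
    · have := J3 (inj_ne x h.1) (inj_ne x h.2.1) (inj_ne x h.2.2)
      rw [if_pos h]
      by_cases hj : cycIoo (x a) (x b) (x e) <;> simp [this, hj]
    · have h1 : ¬ cycIoo (x e) (x b) (x a) := fun hj => h (by have := J_ne hj; simp only [ne_eq, x.injective.eq_iff] at this; tauto)
      have h1' : ¬ cycIoo (x a) (x b) (x e) := fun hj => h (by have := J_ne hj; simp only [ne_eq, x.injective.eq_iff] at this; tauto)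
      simp [h, h1, h1']
  simp only [t1, t2, t3, t4, L1, L2, L3, L4, Finset.sum_add_distrib]
  have perm1 : ∀ G : ZMod n → ZMod n → ZMod n → R, ∑ a, ∑ b, ∑ e, G a b e = ∑ a, ∑ b, ∑ e, G e a b := by
    intro G
    rw [Finset.sum_comm]
    refine Finset.sum_congr rfl fun b _ => ?_
    rw [Finset.sum_comm]
  have perm2 : ∀ G : ZMod n → ZMod n → ZMod n → R, ∑ a, ∑ b, ∑ e, G a b e = ∑ a, ∑ b, ∑ e, G a e b := by
    intro G
    refine Finset.sum_congr rfl fun b _ => ?_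
    rw [Finset.sum_comm]
  have perm3 : ∀ G : ZMod n → ZMod n → ZMod n → R, ∑ a, ∑ b, ∑ e, G a b e = ∑ a, ∑ b, ∑ e, G b e a := by
    intro G
    rw [perm1, perm1]
  have perm4 : ∀ G : ZMod n → ZMod n → ZMod n → R, ∑ a, ∑ b, ∑ e, G a b e = ∑ a, ∑ b, ∑ e, G e b a := by
    intro G
    rw [perm1, Finset.sum_comm]
  have s1 := perm1 fun a b e => if cycIoo (x a) (x e) (x b) then FF w x z b e a b else 0
  have s2 := perm2 fun a b e => if cycIoo (x a) (x e) (x b) then FF w x z a e e b else 0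
  have s3 := perm3 fun a b e => if cycIoo (x e) (x b) (x a) then FF w x z e a a b else 0
  have s4 := perm4 fun a b e => if cycIoo (x e) (x b) (x a) then FF w x z e b a e else 0
  rw [s1, s2, s3, s4]
  generalize (∑ a, ∑ b, ∑ e, if cycIoo (x e) (x b) (x a) then FF w x z a b e a else 0) = q1
  generalize (∑ a, ∑ b, ∑ e, if cycIoo (x a) (x b) (x e) then FF w x z a b b e else 0) = q2
  generalize (∑ a, ∑ b, ∑ e, if cycIoo (x a) (x e) (x b) then FF w x z a b b e else 0) = q3
  generalize (∑ a, ∑ b, ∑ e, if cycIoo (x a) (x b) (x e) then FF w x z a b e a else 0) = q4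
  linear_combination h2 q1 + h2 q2 + h2 q3 + h2 q4

theorem D_sq (w : ZMod n → ZMod n → R) (x z : Equiv.Perm (ZMod n)) (h2 : ∀ r : R, r + r = 0) :
    ∑ a, ∑ b, ∑ c, ∑ d, FF w x z a b c d = if z = x then ∑ a, ∏ j, w a j + ∑ j, ∏ i, w i j else 0 := by
  rcases lt_or_ge n 2 with hn | hn
  · have : n = 1 := by have := NeZero.ne n; omega
    subst this
    have hs : Subsingleton (ZMod 1) := inferInstanceAs (Subsingleton (Fin 1))
    have : ∀ a b c d, FF w x z a b c d = 0 := fun a b c d => by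
      rw [hs.elim a b, FF_self1]
    simp only [this]
    have : z = x := Equiv.ext fun i => hs.elim _ _
    rw [if_pos this]
    have hu : (Finset.univ : Finset (ZMod 1)) = {0} := by
      ext i; simp only [Finset.mem_univ, Finset.mem_singleton, true_iff]; exact hs.elim _ _
    simp [hu, h2]
  · rw [split_F _ (FF_self1 w x z) (FF_self2 w x z), sum_disj w x z h2, sum_same1 w x z hn, sum_same2 w x z hn,
      sum_three w x z h2]
    split_ifs <;> simp

end dsq
section linalg

theorem clifford_dvd {k : Type*} [Field k] (m : ℕ) : ∀ (V : Type*) [AddCommGroup V] [Module k V] [FiniteDimensional k V]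
    (p q : Fin m → Module.End k V), (∀ i, p i * p i = 0) → (∀ i j, p i * p j + p j * p i = 0) →
    (∀ i j, p i * q j + q j * p i = if i = j then 1 else 0) → 2 ^ m ∣ Module.finrank k V := by
  induction m with
  | zero => intros; simp
  | succ m ih =>
    intro V _ _ _ p q h1 h2 h3
    let U := LinearMap.ker (p 0)
    have hU : ∀ (f : Module.End k V), p 0 * f + f * p 0 = 0 → ∀ v ∈ U, f v ∈ U := by
      intro f hf v hv
      have hv' : p 0 v = 0 := hv
      have := LinearMap.congr_fun hf v
      simp only [LinearMap.add_apply, Module.End.mul_apply, hv', map_zero, add_zero, LinearMap.zero_apply] at this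
      exact this
    have hp : ∀ i : Fin m, ∀ v ∈ U, p i.succ v ∈ U := fun i => hU _ (h2 _ _)
    have hq : ∀ i : Fin m, ∀ v ∈ U, q i.succ v ∈ U := fun i => hU _ (by
      rw [h3, if_neg (Fin.succ_ne_zero i).symm])
    have hr : LinearMap.range (p 0) = U := by
      apply le_antisymm
      · rintro _ ⟨v, rfl⟩
        exact LinearMap.congr_fun (h1 0) v
      · intro v hv
        have hv' : p 0 v = 0 := hv
        have := LinearMap.congr_fun (h3 0 0) v
        simp only [LinearMap.add_apply, Module.End.mul_apply, hv', map_zero, add_zero, if_true, Module.End.one_apply] at this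
        exact ⟨_, this⟩
    have hdim := LinearMap.finrank_range_add_finrank_ker (p 0)
    rw [hr] at hdim
    have := ih U (fun i => (p i.succ).restrict (hp i)) (fun i => (q i.succ).restrict (hq i)) ?_ ?_ ?_
    · obtain ⟨t, ht⟩ := this
      refine ⟨t, ?_⟩
      rw [← hdim]
      change Module.finrank k U + Module.finrank k U = _
      rw [ht]; ring
    · intro i
      ext v
      simpa using LinearMap.congr_fun (h1 i.succ) (v : V)
    · intro i j
      ext v
      simpa using LinearMap.congr_fun (h2 i.succ j.succ) (v : V)
    · intro i j
      ext v
      have := LinearMap.congr_fun (h3 i.succ j.succ) (v : V)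
      by_cases hij : i = j
      · simpa [hij] using this
      · simpa [hij] using this

variable {k V : Type*} [Field k] [AddCommGroup V] [Module k V]

abbrev Hom' (d : Module.End k V) := LinearMap.ker d ⧸
    (Submodule.comap (LinearMap.ker d).subtype (LinearMap.range d) : Submodule k (LinearMap.ker d))

theorem Hmap_aux (d : Module.End k V) (f : Module.End k V) (hf : d * f = f * d) :
    ∀ v ∈ LinearMap.ker d, f v ∈ LinearMap.ker d := by
  intro v hv
  have := LinearMap.congr_fun hf v
  have hv' : d v = 0 := hv
  simpa [hv'] using this

noncomputable def Hmap (d : Module.End k V) (f : Module.End k V) (hf : d * f = f * d) : Module.End k (Hom' d) :=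
  Submodule.mapQ _ _ (f.restrict (Hmap_aux d f hf)) (by
    rintro ⟨v, hv⟩ ⟨u, hu⟩
    exact ⟨f u, by
      have := LinearMap.congr_fun hf u
      simp only [Module.End.mul_apply] at this
      rw [this, hu]; rfl⟩)

theorem Hmap_mk (d : Module.End k V) (f : Module.End k V) (hf : d * f = f * d) (v : LinearMap.ker d) :
    Hmap d f hf (Submodule.Quotient.mk v) = Submodule.Quotient.mk ⟨f v, Hmap_aux d f hf v v.2⟩ := rfl

theorem Hmap_add (d f g h : Module.End k V) (hf : d * f = f * d) (hg : d * g = g * d) (hh : d * h = h * d)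
    (e : h = f + g) : Hmap d h hh = Hmap d f hf + Hmap d g hg := by
  subst e
  refine LinearMap.ext fun v => ?_
  induction v using Submodule.Quotient.induction_on with
  | H v => rfl

theorem Hmap_sq (d f K : Module.End k V) (hf : d * f = f * d) (c : k)
    (e : f * f + d * K + K * d = c • 1) : Hmap d f hf * Hmap d f hf = c • 1 := by
  refine LinearMap.ext fun v => ?_
  induction v using Submodule.Quotient.induction_on with
  | H v =>
    obtain ⟨v, hv⟩ := v
    simp only [Module.End.mul_apply, Hmap_mk, LinearMap.smul_apply, Module.End.one_apply, ← Submodule.Quotient.mk_smul]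
    rw [Submodule.Quotient.eq]
    refine ⟨-K v, ?_⟩
    have := LinearMap.congr_fun e v
    have hv' : d v = 0 := hv
    simp only [LinearMap.add_apply, Module.End.mul_apply, hv', map_zero, add_zero, LinearMap.smul_apply, Module.End.one_apply] at this
    simp [← this]

theorem pol_aux {k A : Type*} [Field k] [Ring A] [Algebra k A] {x y : A} {a b c : k}
    (h1 : (x + y) * (x + y) = a • (1 : A)) (h2 : x * x = b • (1 : A)) (h3 : y * y = c • (1 : A)) :
    x * y + y * x = (a - b - c) • (1 : A) := by
  rw [sub_smul, sub_smul, ← h1, ← h2, ← h3]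
  noncomm_ring

theorem main_alg [FiniteDimensional k V] (d : Module.End k V) {W : Type*} [AddCommGroup W] (Q K : W → Module.End k V)
    (B : W → k) (hadd : ∀ u v, Q (u + v) = Q u + Q v) (hcomm : ∀ v, d * Q v = Q v * d)
    (hsq : ∀ v, Q v * Q v + d * K v + K v * d = B v • 1)
    (m : ℕ) (c e : Fin m → W) (hc : ∀ i, B (c i) = 0) (hcc : ∀ i j, B (c i + c j) = 0)
    (hB : ∀ i j, B (c i + e j) - B (c i) - B (e j) = if i = j then 1 else 0) :
    2 ^ m ∣ Module.finrank k (Hom' d) := by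
  have sq : ∀ v, Hmap d (Q v) (hcomm v) * Hmap d (Q v) (hcomm v) = B v • 1 := fun v => Hmap_sq _ _ _ _ _ (hsq v)
  have pol : ∀ u v, Hmap d (Q u) (hcomm u) * Hmap d (Q v) (hcomm v) + Hmap d (Q v) (hcomm v) * Hmap d (Q u) (hcomm u)
      = (B (u + v) - B u - B v) • 1 := by
    intro u v
    have := sq (u + v)
    rw [Hmap_add d (Q u) (Q v) (Q (u + v)) (hcomm u) (hcomm v) (hcomm _) (hadd u v)] at this
    exact pol_aux this (sq u) (sq v)
  apply clifford_dvd m (Hom' d) (fun i => Hmap d (Q (c i)) (hcomm _)) (fun i => Hmap d (Q (e i)) (hcomm _))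
  · intro i; rw [sq, hc, zero_smul]
  · intro i j; rw [pol, hcc, hc, hc]; simp
  · intro i j; rw [pol, hB]; split_ifs <;> simp

theorem exists_dual [NeZero n] (π : Equiv.Perm (ZMod n)) : ∃ m, n - numOrbits π ≤ m ∧
    ∃ c e : Fin m → (ZMod n → ZMod 2), ∀ i j, ∑ a, c i a * (e j a + e j (π a)) = if i = j then 1 else 0 := by
  let L : (ZMod n → ZMod 2) →ₗ[ZMod 2] (ZMod n → ZMod 2) :=
    LinearMap.id + LinearMap.funLeft (ZMod 2) (ZMod 2) π
  have hL : ∀ f a, L f a = f a + f (π a) := fun f a => rfl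
  refine ⟨Module.finrank (ZMod 2) (LinearMap.range L), ?_, ?_⟩
  · have h1 := LinearMap.finrank_range_add_finrank_ker L
    rw [Module.finrank_fintype_fun_eq_card, ZMod.card] at h1
    have h2 : Module.finrank (ZMod 2) (LinearMap.ker L) ≤ numOrbits π := by
      have : Finite (Quotient (orbitSetoid π)) := inferInstance
      have := Fintype.ofFinite (Quotient (orbitSetoid π))
      let g : LinearMap.ker L →ₗ[ZMod 2] (Quotient (orbitSetoid π) → ZMod 2) :=
        (LinearMap.funLeft (ZMod 2) (ZMod 2) Quotient.out) ∘ₗ (LinearMap.ker L).subtype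
      have hg : Function.Injective g := by
        rw [injective_iff_map_eq_zero]
        rintro ⟨f, hf⟩ h
        have hf1 : ∀ a, f (π a) = f a := by
          intro a
          have : f a + f (π a) = 0 := congrFun (show L f = 0 from hf) a
          have h2 := CharTwo.add_self_eq_zero (f a)
          linear_combination this - h2
        have hinv : ∀ a, f (π⁻¹ a) = f a := fun a => by
          have := hf1 (π⁻¹ a); simpa using this.symm
        have hz : ∀ (t : ℤ) a, f ((π ^ t) a) = f a := by
          intro t a
          induction t using Int.induction_on with
          | zero => simp
          | succ t ih => rw [add_comm, zpow_add, zpow_one, Equiv.Perm.mul_apply, hf1, ih]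
          | pred t ih => rw [sub_eq_add_neg, add_comm, zpow_add, zpow_neg_one, Equiv.Perm.mul_apply, hinv, ih]
        ext a
        have h3 := congrFun h (Quotient.mk (orbitSetoid π) a)
        have h4 : (orbitSetoid π).r (Quotient.out (Quotient.mk (orbitSetoid π) a)) a := Quotient.mk_out (s := orbitSetoid π) a
        obtain ⟨t, ht⟩ := h4
        change f (Quotient.out (Quotient.mk (orbitSetoid π) a)) = 0 at h3
        change f a = 0
        rw [← ht, hz, h3]
      have := LinearMap.finrank_le_finrank_of_injective hg
      rwa [Module.finrank_fintype_fun_eq_card, ← Nat.card_eq_fintype_card] at this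
    omega
  · let b := Module.finBasis (ZMod 2) (LinearMap.range L)
    have he : ∀ j, ∃ f, L f = b j := fun j => (b j).2
    choose e he using he
    have hc : ∀ i, ∃ g : (ZMod n → ZMod 2) →ₗ[ZMod 2] ZMod 2, g ∘ₗ (LinearMap.range L).subtype = b.coord i :=
      fun i => LinearMap.exists_extend _
    choose g hg using hc
    refine ⟨fun i a => g i (Pi.single a 1), e, fun i j => ?_⟩
    have h1 : g i (L (e j)) = if i = j then 1 else 0 := by
      rw [he]
      have := LinearMap.congr_fun (hg i) (b j)
      simp only [LinearMap.comp_apply, Submodule.subtype_apply, Module.Basis.coord_apply, Module.Basis.repr_self] at this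
      rw [this, Finsupp.single_apply]
      simp only [eq_comm]
    rw [← h1, LinearMap.pi_apply_eq_sum_univ (g i) (L (e j))]
    refine Finset.sum_congr rfl fun a _ => ?_
    rw [hL, smul_eq_mul, mul_comm]
    have hs : (Pi.single a 1 : ZMod n → ZMod 2) = fun j => if a = j then 1 else 0 := by
      ext t
      simp [Pi.single_apply, eq_comm]
    beta_reduce
    rw [hs]
end linalg
section final
open Polynomial
variable [NeZero n]

noncomputable def ww (σO σX : Equiv.Perm (ZMod n)) (v : ZMod n ⊕ ZMod n → ZMod 2) (i j : ZMod n) : (ZMod 2)[X] :=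
  (if j = σO i then C (v (Sum.inl i)) * X else 1) * (if j = σX i then C (v (Sum.inr i)) * X else 1)

def mkk (σO σX : Equiv.Perm (ZMod n)) : ZMod n ⊕ ZMod n → ZMod n × ZMod n :=
  Sum.elim (fun i => (i, σO i)) (fun i => (i, σX i))

noncomputable def SS (σO σX : Equiv.Perm (ZMod n)) (a b p q : ZMod n) : Finset (ZMod n ⊕ ZMod n) :=
  Finset.univ.filter fun k => cycIco a b (mkk σO σX k).1 ∧ cycIco p q (mkk σO σX k).2

theorem Wt_gen (σO σX : Equiv.Perm (ZMod n)) (g : ZMod n ⊕ ZMod n → (ZMod 2)[X]) (a b p q : ZMod n) :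
    Wt (fun i j => (if j = σO i then g (Sum.inl i) else 1) * (if j = σX i then g (Sum.inr i) else 1)) a b p q
      = ∏ k ∈ SS σO σX a b p q, g k := by
  have e : ∏ k ∈ SS σO σX a b p q, g k =
      ∏ k, if cycIco a b (mkk σO σX k).1 ∧ cycIco p q (mkk σO σX k).2 then g k else 1 := by
    unfold SS
    rw [Finset.prod_filter]
  rw [e, Fintype.prod_sum_type]
  unfold Wt
  simp only [Finset.prod_mul_distrib, Finset.prod_filter, mkk, Sum.elim_inl, Sum.elim_inr]
  congr 1
  all_goals
    refine Finset.prod_congr rfl fun i _ => ?_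
    by_cases h : cycIco a b i
    · simp only [h, if_true, true_and]
      rw [← Finset.prod_filter]
      rw [Finset.prod_ite_eq']
      simp
    · simp [h]

theorem Wt_ww (σO σX : Equiv.Perm (ZMod n)) (v : ZMod n ⊕ ZMod n → ZMod 2) (a b p q : ZMod n) :
    Wt (ww σO σX v) a b p q = C (∏ k ∈ SS σO σX a b p q, v k) * X ^ (SS σO σX a b p q).card := by
  have : C (∏ k ∈ SS σO σX a b p q, v k) * X ^ (SS σO σX a b p q).card =
      ∏ k ∈ SS σO σX a b p q, (C (v k) * X) := by
    rw [Finset.prod_mul_distrib, Finset.prod_const, map_prod]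
  rw [this]
  exact Wt_gen σO σX (fun k => C (v k) * X) a b p q

theorem coeff0 (σO σX : Equiv.Perm (ZMod n)) (v : ZMod n ⊕ ZMod n → ZMod 2) (a b p q : ZMod n) :
    (Wt (ww σO σX v) a b p q).coeff 0 = if SS σO σX a b p q = ∅ then 1 else 0 := by
  rw [Wt_ww, coeff_C_mul, coeff_X_pow]
  by_cases h : SS σO σX a b p q = ∅
  · simp [h]
  · have : 0 ≠ (SS σO σX a b p q).card := fun h' => h (Finset.card_eq_zero.1 h'.symm)
    simp [h, this]

theorem coeff1 (σO σX : Equiv.Perm (ZMod n)) (v : ZMod n ⊕ ZMod n → ZMod 2) (a b p q : ZMod n) :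
    (Wt (ww σO σX v) a b p q).coeff 1 = ∑ k, if SS σO σX a b p q = {k} then v k else 0 := by
  rw [Wt_ww, coeff_C_mul, coeff_X_pow]
  by_cases h : 1 = (SS σO σX a b p q).card
  · obtain ⟨k, hk⟩ := Finset.card_eq_one.1 h.symm
    simp [hk]
  · rw [if_neg h, mul_zero, Finset.sum_eq_zero]
    intro k _
    rw [if_neg]
    intro h'
    apply h; rw [h']; simp

noncomputable def MM (σO σX : Equiv.Perm (ZMod n)) (v : ZMod n ⊕ ZMod n → ZMod 2) :
    Matrix (Equiv.Perm (ZMod n)) (Equiv.Perm (ZMod n)) (ZMod 2)[X] :=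
  fun z x => ∑ a, ∑ b, if z = x * Equiv.swap a b then VV (ww σO σX v) x a b else 0

noncomputable def NN (σO σX : Equiv.Perm (ZMod n)) (r : ℕ) (v : ZMod n ⊕ ZMod n → ZMod 2) :
    Matrix (Equiv.Perm (ZMod n)) (Equiv.Perm (ZMod n)) (ZMod 2) :=
  fun z x => (MM σO σX v z x).coeff r

noncomputable def BB (σO σX : Equiv.Perm (ZMod n)) (v : ZMod n ⊕ ZMod n → ZMod 2) : ZMod 2 :=
  ∑ a, v (Sum.inl a) * (v (Sum.inr a) + v (Sum.inr ((σX⁻¹ * σO) a)))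

theorem MM_sq (σO σX : Equiv.Perm (ZMod n)) (v : ZMod n ⊕ ZMod n → ZMod 2) (z x : Equiv.Perm (ZMod n)) :
    ∑ y, MM σO σX v z y * MM σO σX v y x = if z = x then C (BB σO σX v) * X ^ 2 else 0 := by
  have h := D_sq (ww σO σX v) x z (fun r => CharTwo.add_self_eq_zero r)
  have e1 : ∑ y, MM σO σX v z y * MM σO σX v y x = ∑ a, ∑ b, ∑ c, ∑ d, FF (ww σO σX v) x z a b c d := by
    unfold MM
    simp only [Finset.mul_sum]
    rw [Finset.sum_comm]
    refine Finset.sum_congr rfl fun a _ => ?_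
    rw [Finset.sum_comm]
    refine Finset.sum_congr rfl fun b _ => ?_
    rw [Finset.sum_eq_single (x * Equiv.swap a b)]
    · rw [if_pos rfl, Finset.sum_mul]
      refine Finset.sum_congr rfl fun c _ => ?_
      rw [Finset.sum_mul]
      refine Finset.sum_congr rfl fun d _ => ?_
      unfold FF
      split_ifs
      · ring
      · ring
    · intro y _ hy
      rw [if_neg hy, mul_zero]
    · simp
  rw [e1, h]
  congr 1
  have r1 : ∀ a, ∏ j, ww σO σX v a j = C (v (Sum.inl a) * v (Sum.inr a)) * X ^ 2 := by
    intro a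
    simp only [ww, Finset.prod_mul_distrib, Finset.prod_ite_eq', Finset.mem_univ, if_true, C_mul]
    ring
  have r2 : ∀ a, ∏ i, ww σO σX v i (σO a) = C (v (Sum.inl a) * v (Sum.inr ((σX⁻¹ * σO) a))) * X ^ 2 := by
    intro a
    have q1 : ∀ i, (σO a = σO i) ↔ (a = i) := fun i => σO.injective.eq_iff
    have q2 : ∀ i, (σO a = σX i) ↔ ((σX⁻¹ * σO) a = i) := fun i => by
      rw [Equiv.Perm.mul_apply, Equiv.Perm.inv_eq_iff_eq]
    simp only [ww, Finset.prod_mul_distrib, q1, q2, Finset.prod_ite_eq, Finset.mem_univ, if_true, C_mul]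
    ring
  rw [← Equiv.sum_comp σO (fun j => ∏ i, ww σO σX v i j)]
  simp only [r1, r2, ← Finset.sum_mul, ← add_mul, ← map_sum, ← C_add]
  unfold BB
  simp only [mul_add, Finset.sum_add_distrib]

theorem NN_comm (σO σX : Equiv.Perm (ZMod n)) (v : ZMod n ⊕ ZMod n → ZMod 2) :
    NN σO σX 0 v * NN σO σX 1 v + NN σO σX 1 v * NN σO σX 0 v = 0 := by
  ext z x
  have h := congrArg (fun p => coeff p 1) (MM_sq σO σX v z x)
  simp only [finsetSum_coeff, coeff_mul, Finset.Nat.antidiagonal_succ, Finset.Nat.antidiagonal_zero] at h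
  simp [Finset.sum_add_distrib] at h
  simp only [Matrix.add_apply, Matrix.mul_apply, NN, Matrix.zero_apply]
  rw [h]
  split_ifs <;> simp

theorem NN_sq (σO σX : Equiv.Perm (ZMod n)) (v : ZMod n ⊕ ZMod n → ZMod 2) :
    NN σO σX 1 v * NN σO σX 1 v + NN σO σX 0 v * NN σO σX 2 v + NN σO σX 2 v * NN σO σX 0 v = BB σO σX v • 1 := by
  ext z x
  have h := congrArg (fun p => coeff p 2) (MM_sq σO σX v z x)
  simp only [finsetSum_coeff, coeff_mul, Finset.Nat.antidiagonal_succ, Finset.Nat.antidiagonal_zero] at h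
  simp [Finset.sum_add_distrib] at h
  simp only [Matrix.add_apply, Matrix.mul_apply, NN, Matrix.smul_apply, Matrix.one_apply]
  rw [smul_eq_mul, mul_ite, mul_one, mul_zero]
  have e : (if z = x then C (BB σO σX v) * X ^ 2 else 0 : (ZMod 2)[X]).coeff 2 = if z = x then BB σO σX v else 0 := by
    split_ifs <;> simp
  rw [← e]
  linear_combination h

theorem NN_add (σO σX : Equiv.Perm (ZMod n)) (u v : ZMod n ⊕ ZMod n → ZMod 2) :
    NN σO σX 1 (u + v) = NN σO σX 1 u + NN σO σX 1 v := by
  ext z x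
  simp only [NN, MM, Matrix.add_apply, finsetSum_coeff, ← Finset.sum_add_distrib]
  refine Finset.sum_congr rfl fun a _ => Finset.sum_congr rfl fun b _ => ?_
  unfold VV
  split_ifs
  · simp only [coeff1, ← Finset.sum_add_distrib]
    refine Finset.sum_congr rfl fun k _ => ?_
    split_ifs <;> simp
  all_goals simp

theorem NN_zero (σO σX : Equiv.Perm (ZMod n)) (v : ZMod n ⊕ ZMod n → ZMod 2) :
    Matrix.toLinAlgEquiv (Finsupp.basisSingleOne (R := ZMod 2) (ι := Equiv.Perm (ZMod n))) (NN σO σX 0 v)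
      = tildeDiff σO σX := by
  refine (Finsupp.basisSingleOne (R := ZMod 2) (ι := Equiv.Perm (ZMod n))).ext fun x => ?_
  rw [Matrix.toLinAlgEquiv_self]
  simp only [Finsupp.coe_basisSingleOne, tildeDiff, Finsupp.lsum_single, LinearMap.toSpanSingleton_apply, one_smul, tildeImage]
  refine Finset.sum_congr rfl fun y _ => ?_
  simp only [NN, MM, finsetSum_coeff, Finset.sum_smul]
  refine Finset.sum_congr rfl fun a _ => Finset.sum_congr rfl fun b _ => ?_
  have hS : SS σO σX a b (x a) (x b) = ∅ ↔ (∀ i : ZMod n, (i, σO i) ∉ rectSquares x a b) ∧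
        (∀ i : ZMod n, (i, σX i) ∉ rectSquares x a b) := by
    unfold SS
    rw [Finset.filter_eq_empty_iff]
    simp [mkk, rectSquares]
  have hE : IsEmptyRect x y a b ↔ (y = x * Equiv.swap a b ∧ a ≠ b ∧ EE x a b) := by
    unfold IsEmptyRect IsRect EE rectInterior
    simp only [Set.mem_ofPred_eq]
    tauto
  unfold VV
  by_cases h1 : y = x * Equiv.swap a b
  · by_cases h2 : a ≠ b ∧ EE x a b
    · rw [if_pos h1, if_pos h2, coeff0]
      by_cases h3 : SS σO σX a b (x a) (x b) = ∅
      · rw [if_pos h3, if_pos ⟨hE.2 ⟨h1, h2⟩, hS.1 h3⟩, one_smul]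
      · rw [if_neg h3, if_neg (fun h => h3 (hS.2 h.2)), zero_smul]
    · rw [if_pos h1, if_neg h2, if_neg (fun h => h2 (hE.1 h.1).2)]; simp
  · rw [if_neg h1, if_neg (fun h => h1 (hE.1 h.1).1)]; simp

end final

theorem tildeHomology_dim_divisible (n : ℕ) [NeZero n]
    (σO σX : Equiv.Perm (ZMod n)) :
    2 ^ (n - numOrbits (σX⁻¹ * σO)) ∣
      Module.finrank (ZMod 2) (tildeHomology n σO σX) := by
  obtain ⟨m, hm, c, e, hce⟩ := exists_dual (σX⁻¹ * σO)
  refine (pow_dvd_pow 2 hm).trans ?_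
  let T := Matrix.toLinAlgEquiv (Finsupp.basisSingleOne (R := ZMod 2) (ι := Equiv.Perm (ZMod n)))
  refine main_alg (tildeDiff σO σX) (W := ZMod n ⊕ ZMod n → ZMod 2) (fun v => T (NN σO σX 1 v))
    (fun v => T (NN σO σX 2 v)) (BB σO σX) ?_ ?_ ?_ m (fun i => Sum.elim (c i) 0) (fun i => Sum.elim 0 (e i)) ?_ ?_ ?_
  · intro u v
    rw [NN_add, map_add]
  · intro v
    rw [← NN_zero σO σX v]
    change T _ * T _ = T _ * T _
    rw [← map_mul, ← map_mul]
    congr 1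
    rw [eq_comm, ← sub_eq_zero, ← NN_comm σO σX v]
    rw [sub_eq_iff_eq_add]
    have : ∀ A : Matrix (Equiv.Perm (ZMod n)) (Equiv.Perm (ZMod n)) (ZMod 2), A + A = 0 := by
      intro A; ext i j; exact CharTwo.add_self_eq_zero _
    rw [add_right_comm, this, zero_add]
  · intro v
    rw [← NN_zero σO σX v]
    change T _ * T _ + T _ * T _ + T _ * T _ = _
    rw [← map_mul, ← map_mul, ← map_mul, ← map_add, ← map_add, NN_sq, map_smul, map_one]
  · intro i; simp [BB]
  · intro i j; simp [BB]
  · intro i j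
    rw [← hce i j]
    simp [BB]

end GridDiagrams
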